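/- One has R¹ = 0, R² = k·(z₁−z₂)^{−4}, and R³ = R³₀ = k·(z₁−z₂)^{−2}(z₁−z₃)^{−2}(z₂−z₃)^{−2}; that is, the space of admissible functions in one variable is zero, in two variables it is the one-dimensional space spanned by (z₁−z₂)^{−4}, and in three variables both the space of admissible functions and the space of indecomposable admissible functions equal the one-dimensional space spanned by (z₁−z₂)^{−2}(z₁−z₃)^{−2}(z₂−z₃)^{−2}. -/

import Mathlib

open scoped Classical

noncomputable section

namespace Griess

open MvPolynomial

variable {k : Type} [Field k]

/-- The field `k(z₁,…,z_l)` of rational functions over `k` in `l` variables. -/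
abbrev RF (k : Type) [Field k] (l : ℕ) : Type := FractionRing (MvPolynomial (Fin l) k)

/-- The variable `zᵢ` as an element of the rational function field. -/
def zv {k : Type} [Field k] {l : ℕ} (i : Fin l) : RF k l :=
  algebraMap (MvPolynomial (Fin l) k) (RF k l) (MvPolynomial.X i)

/-- The space `Φ^l` of rational functions of the form
`p(z₁,…,z_l) · ∏_{i<j} (zᵢ - z_j)^{k_{ij}}`. -/
def Phi (k : Type) [Field k] (l : ℕ) : Set (RF k l) :=
  { x | ∃ (p : MvPolynomial (Fin l) k) (e : Fin l → Fin l → ℤ),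
      x = algebraMap (MvPolynomial (Fin l) k) (RF k l) p *
        ∏ i : Fin l, ∏ j : Fin l, (if i < j then (zv i - zv j) ^ e i j else 1) }

/-- `D` is the family of partial derivative operators `∂_{z₁},…,∂_{z_l}`:
a family of `k`-linear derivations with `D i (z j) = δ_{ij}`. -/
def IsPartialDeriv {l : ℕ} (D : Fin l → Derivation k (RF k l) (RF k l)) : Prop :=
  ∀ i j : Fin l, D i (zv j) = if j = i then 1 else 0

/-- The operator `Δ = Σᵢ ∂_{zᵢ}`. -/
def Delta {l : ℕ} (D : Fin l → Derivation k (RF k l) (RF k l)) (α : RF k l) : RF k l :=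
  ∑ i, D i α

/-- The operator `Δ*(n₁,…,n_l) = Σᵢ (zᵢ² ∂_{zᵢ} + nᵢ zᵢ)`. -/
def DeltaStar {l : ℕ} (D : Fin l → Derivation k (RF k l) (RF k l)) (n : Fin l → ℤ)
    (α : RF k l) : RF k l :=
  ∑ i, ((zv i) ^ 2 * D i α + (n i : RF k l) * zv i * α)

section Subst

variable {l : ℕ}

/-- The embedding of polynomials in `z₁,…,z_l` into rational functions of
`z₁,…,z_l` and one extra variable `t` (`= RatFunc.X`). -/
def toRatFuncHom (k : Type) [Field k] (l : ℕ) :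
    Polynomial (MvPolynomial (Fin l) k) →+* RatFunc (RF k l) :=
  (algebraMap (Polynomial (RF k l)) (RatFunc (RF k l))).comp
    (Polynomial.mapRingHom (algebraMap (MvPolynomial (Fin l) k) (RF k l)))

lemma toRatFuncHom_injective : Function.Injective (toRatFuncHom k l) := by
  have h1 : Function.Injective (algebraMap (Polynomial (RF k l)) (RatFunc (RF k l))) :=
    IsFractionRing.injective _ _
  have h2 : Function.Injective
      (Polynomial.mapRingHom (algebraMap (MvPolynomial (Fin l) k) (RF k l))) :=
    Polynomial.map_injective _ (IsFractionRing.injective _ _)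
  exact fun a b hab => h2 (h1 hab)

/-- Polynomial level substitution `z_j ↦ t·z_j` for `j ∈ J`. -/
def scaleAux (k : Type) [Field k] (l : ℕ) (J : Finset (Fin l)) :
    MvPolynomial (Fin l) k →+* Polynomial (MvPolynomial (Fin l) k) :=
  (MvPolynomial.aeval (R := k) fun i =>
    if i ∈ J then Polynomial.X * Polynomial.C (MvPolynomial.X i)
    else Polynomial.C (MvPolynomial.X i)).toRingHom

lemma scaleAux_injective (J : Finset (Fin l)) :
    Function.Injective (scaleAux k l J) := by
  have h : (Polynomial.evalRingHom (1 : MvPolynomial (Fin l) k)).comp (scaleAux k l J)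
      = RingHom.id _ := by
    apply MvPolynomial.ringHom_ext
    · intro r; simp [scaleAux]
    · intro i; by_cases hi : i ∈ J <;> simp [scaleAux, hi]
  intro p q hpq
  have hp := DFunLike.congr_fun h p
  have hq := DFunLike.congr_fun h q
  simp only [RingHom.comp_apply, RingHom.id_apply] at hp hq
  rw [← hp, ← hq, hpq]

/-- The substitution `z_j ↦ t·z_j` (for `j ∈ J`), as a map from rational functions
in `z₁,…,z_l` to rational functions in `z₁,…,z_l` and `t`.  Reading off the
coefficients of the Laurent expansion in `t` at `t = 0` of `scaleJ J α` yields the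
decomposition of `α` into its homogeneous components with respect to the total degree
in the variables `{z_j : j ∈ J}`, i.e. the expansion of `α` in the domain where the
variables of `J` are much smaller than the remaining variables. -/
def scaleJ (J : Finset (Fin l)) : RF k l →+* RatFunc (RF k l) :=
  IsFractionRing.lift (g := (toRatFuncHom k l).comp (scaleAux k l J))
    (fun a b hab => scaleAux_injective J (toRatFuncHom_injective hab))

/-- Polynomial level substitution `z_i ↦ z_j + t`. -/
def subPairAux (k : Type) [Field k] (l : ℕ) (i j : Fin l) :
    MvPolynomial (Fin l) k →+* Polynomial (MvPolynomial (Fin l) k) :=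
  (MvPolynomial.aeval (R := k) fun s =>
    if s = i then Polynomial.X + Polynomial.C (MvPolynomial.X j)
    else Polynomial.C (MvPolynomial.X s)).toRingHom

lemma subPairAux_injective (i j : Fin l) :
    Function.Injective (subPairAux k l i j) := by
  have h : (Polynomial.evalRingHom (MvPolynomial.X i - MvPolynomial.X j)).comp
      (subPairAux k l i j) = RingHom.id _ := by
    apply MvPolynomial.ringHom_ext
    · intro r; simp [subPairAux]
    · intro s; by_cases hs : s = i <;> simp [subPairAux, hs]
  intro p q hpq
  have hp := DFunLike.congr_fun h p
  have hq := DFunLike.congr_fun h q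
  simp only [RingHom.comp_apply, RingHom.id_apply] at hp hq
  rw [← hp, ← hq, hpq]

/-- The substitution `z_i ↦ z_j + t`, as a map from rational functions in `z₁,…,z_l`
to rational functions in the variables `z₁,…,z_l` and `t`.  Reading off the Laurent
coefficients in `t` at `t = 0` yields the expansion of a rational function in powers
of `z_i - z_j`, with coefficients not involving `z_i`. -/
def subPair (i j : Fin l) : RF k l →+* RatFunc (RF k l) :=
  IsFractionRing.lift (g := (toRatFuncHom k l).comp (subPairAux k l i j))
    (fun a b hab => subPairAux_injective i j (toRatFuncHom_injective hab))

end Subst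

/-- The coefficient of `tᵐ` in the Laurent expansion at `t = 0` of a rational
function of `t`. -/
def lcoeff {L : Type} [Field L] (m : ℤ) (f : RatFunc L) : L :=
  (f : LaurentSeries L).coeff m

/-- The component `(α)_n` of `α` of degree `n` with respect to the partition
`{1,…,l} = Jᶜ ⊔ J` and the weights `d`:  the part of the expansion of `α` in the
domain where the variables of `J` are much smaller than those of `Jᶜ` whose total
degree in the variables `{z_j : j ∈ J}` equals `n - Σ_{j∈J} d_j`. -/
def component {l : ℕ} (J : Finset (Fin l)) (d : Fin l → ℤ) (n : ℤ) (α : RF k l) :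
    RF k l :=
  lcoeff (n - ∑ j ∈ J, d j) (scaleJ J α)

/-- `α` is homogeneous of total degree `d` in the variables `{z_i : i ∈ S}`:
substituting `z_i ↦ t·z_i` for `i ∈ S` multiplies `α` by `t^d`. -/
def IsHomogeneousOn {l : ℕ} (S : Finset (Fin l)) (d : ℤ) (α : RF k l) : Prop :=
  scaleJ S α = RatFunc.X ^ d * RatFunc.C α

/-- `ρ^{(m)}_{ij} α`: the coefficient of `(z_i - z_j)^m` in the expansion of `α`
in powers of `z_i - z_j` (the coefficients do not involve `z_i`). -/
def rho {l : ℕ} (i j : Fin l) (m : ℤ) (α : RF k l) : RF k l :=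
  lcoeff m (subPair i j α)

/-- `α` is a rational function of the variables `{z_i : i ∈ S}` only. -/
def dependsOnlyOn {l : ℕ} (S : Finset (Fin l)) (α : RF k l) : Prop :=
  α ∈ Subfield.closure (Set.range (algebraMap k (RF k l)) ∪ {x | ∃ i ∈ S, x = zv i})

/-- `α` is an admissible function of the variables `{z_i : i ∈ S}` (the space
`R^{|S|}`):  `α ∈ Φ` is a rational function of the variables of `S` only, it is
`(4,…,4)`-regular and homogeneous of degree `-2|S|` in these variables, and all its
components of negative degree, as well as those of degree `1`, vanish (with respect
to every partition of `S` and all weights equal to `2`). -/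
def Admissible {l : ℕ} (D : Fin l → Derivation k (RF k l) (RF k l)) (S : Finset (Fin l))
    (α : RF k l) : Prop :=
  α ∈ Phi k l ∧ dependsOnlyOn S α ∧
    (∑ i ∈ S, ((zv i) ^ 2 * D i α + 4 * zv i * α)) = 0 ∧
    IsHomogeneousOn S (-(2 * (S.card : ℤ))) α ∧
    ∀ J ⊆ S, ∀ n : ℤ, (n < 0 ∨ n = 1) → component J (fun _ => 2) n α = 0

/-- `α` is an indecomposable admissible function of the variables `{z_i : i ∈ S}`
(the space `R₀^{|S|}`): admissible, and all the components `(α)₀` with respect to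
partitions of `S` into two nonempty parts vanish. -/
def AdmissibleInd {l : ℕ} (D : Fin l → Derivation k (RF k l) (RF k l))
    (S : Finset (Fin l)) (α : RF k l) : Prop :=
  Admissible D S α ∧
    ∀ J ⊆ S, J ≠ ∅ → J ≠ S → component J (fun _ => 2) 0 α = 0

section Shift

variable {l : ℕ}

/-- Polynomial level substitution `z_s ↦ z_s - z_t` for `s ∈ S`. -/
def shiftAuxP (k : Type) [Field k] (l : ℕ) (S : Finset (Fin l)) (t : Fin l) :
    MvPolynomial (Fin l) k →+* MvPolynomial (Fin l) k :=
  (MvPolynomial.aeval (R := k) fun s =>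
    if s ∈ S then MvPolynomial.X s - MvPolynomial.X t else MvPolynomial.X s).toRingHom

lemma shiftAuxP_injective (S : Finset (Fin l)) (t : Fin l) (ht : t ∉ S) :
    Function.Injective (shiftAuxP k l S t) := by
  have h : ((MvPolynomial.aeval (R := k) fun s =>
      if s ∈ S then MvPolynomial.X s + MvPolynomial.X t
      else MvPolynomial.X s).toRingHom).comp (shiftAuxP k l S t) = RingHom.id _ := by
    apply MvPolynomial.ringHom_ext
    · intro r; simp [shiftAuxP]
    · intro s
      by_cases hs : s ∈ S
      · have hst : s ≠ t := fun hst => ht (hst ▸ hs)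
        simp [shiftAuxP, hs, ht]
      · simp [shiftAuxP, hs]
  intro p q hpq
  have hp := DFunLike.congr_fun h p
  have hq := DFunLike.congr_fun h q
  simp only [RingHom.comp_apply, RingHom.id_apply] at hp hq
  rw [← hp, ← hq, hpq]

/-- The shift operator substituting `z_s - z_t` for `z_s`, for all `s ∈ S`. -/
def shiftT (S : Finset (Fin l)) (t : Fin l) (ht : t ∉ S) : RF k l →+* RF k l :=
  IsFractionRing.lift
    (g := (algebraMap (MvPolynomial (Fin l) k) (RF k l)).comp (shiftAuxP k l S t))
    (fun a b hab =>
      shiftAuxP_injective S t ht (IsFractionRing.injective _ _ hab))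

/-- The operator `ℰ = Σ_{s ∈ S} (-z_s⁻¹ ∂_{z_s} + 2 z_s⁻²)`. -/
def curlyE {l : ℕ} (D : Fin l → Derivation k (RF k l) (RF k l)) (S : Finset (Fin l))
    (β : RF k l) : RF k l :=
  ∑ s ∈ S, (-((zv s)⁻¹ * D s β) + 2 * (zv s) ^ (-2 : ℤ) * β)

end Shift

end Griess

namespace Griess

/-! The operators `∑ᵢ ∂ᵢ`, `∑ᵢ zᵢ ∂ᵢ` and `∑ᵢ zᵢ² ∂ᵢ` span the `sl₂` of infinitesimal Möbius
transformations. A regular function `α ∈ Φ^l`, homogeneous of degree `-(∑ᵢ nᵢ) / 2`, is a primitive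
vector of weight zero, and the translation field is locally nilpotent on `Φ^l`, so it kills `α`.
Hence for two such functions `α` and `v` the Wronskians `wᵢ = v ∂ᵢα - α ∂ᵢv` satisfy
`∑ᵢ zᵢ ^ r wᵢ = 0` for `r = 0, 1, 2`. When `l ≤ 3` the Vandermonde determinant forces all `wᵢ` to
vanish, so `α / v` is constant. The spaces in question are therefore at most one-dimensional, and
the conditions on components need only be checked on the explicit generators. -/

section

open MvPolynomial

section PolynomialConstants

variable {σ R : Type*} [CommSemiring R]

lemma degreeOf_pderiv_lt {i : σ} {p : MvPolynomial σ R} (h : pderiv i p ≠ 0) :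
    degreeOf i (pderiv i p) < degreeOf i p := by
  have succ_le : ∀ m ∈ (pderiv i p).support, m i + 1 ≤ degreeOf i p := by
    intro m hm
    rw [mem_support_iff, coeff_pderiv] at hm
    simpa using monomial_le_degreeOf i (mem_support_iff.2 (left_ne_zero_of_mul hm))
  obtain ⟨m, hm⟩ := support_nonempty.2 h
  exact (degreeOf_lt_iff (by have := succ_le m hm; lia)).2 fun m hm => succ_le m hm

lemma pderiv_eq_zero_of_dvd_pderiv [NoZeroDivisors R] {i : σ} {p : MvPolynomial σ R}
    (h : p ∣ pderiv i p) : pderiv i p = 0 := by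
  by_contra hne
  obtain ⟨q, hq⟩ := h
  have hlt := degreeOf_pderiv_lt hne
  rw [hq, degreeOf_mul_eq (left_ne_zero_of_mul (hq ▸ hne))
    (right_ne_zero_of_mul (hq ▸ hne))] at hlt
  lia

lemma eq_C_of_forall_pderiv_eq_zero [NoZeroDivisors R] [CharZero R] {p : MvPolynomial σ R}
    (h : ∀ i, pderiv i p = 0) : p = C (coeff 0 p) := by
  ext m
  rw [coeff_C]
  split_ifs with hm
  · rw [hm]
  obtain ⟨i, hi⟩ := Finsupp.ne_iff.1 (Ne.symm hm)
  have hsucc : m - Finsupp.single i 1 + Finsupp.single i 1 = m :=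
    Finsupp.sub_add_single_one_cancel hi
  have hcoeff := coeff_pderiv (i := i) p (m - Finsupp.single i 1)
  rw [h i, coeff_zero, hsucc] at hcoeff
  exact (mul_eq_zero.1 hcoeff.symm).resolve_right (Nat.cast_add_one_ne_zero _)

end PolynomialConstants

variable {k : Type} [Field k] {l : ℕ}

section Derivations

lemma derivation_ext_zv {E₁ E₂ : Derivation k (RF k l) (RF k l)}
    (h : ∀ i, E₁ (zv i) = E₂ (zv i)) : E₁ = E₂ := by
  have h_poly : E₁.compAlgebraMap (MvPolynomial (Fin l) k) =
      E₂.compAlgebraMap (MvPolynomial (Fin l) k) := MvPolynomial.derivation_ext h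
  ext α
  obtain ⟨p, q, -, rfl⟩ := IsFractionRing.div_surjective (MvPolynomial (Fin l) k) α
  have hp : E₁ (algebraMap _ _ p) = E₂ (algebraMap _ _ p) := DFunLike.congr_fun h_poly p
  have hq : E₁ (algebraMap _ _ q) = E₂ (algebraMap _ _ q) := DFunLike.congr_fun h_poly q
  rw [Derivation.leibniz_div, Derivation.leibniz_div, hp, hq]

variable {D : Fin l → Derivation k (RF k l) (RF k l)}

lemma IsPartialDeriv.apply_algebraMap (hD : IsPartialDeriv D) (i : Fin l)
    (p : MvPolynomial (Fin l) k) :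
    D i (algebraMap _ (RF k l) p) = algebraMap _ (RF k l) (pderiv i p) := by
  have h : (D i).compAlgebraMap (MvPolynomial (Fin l) k) =
      (Algebra.linearMap (MvPolynomial (Fin l) k) (RF k l)).compDer (pderiv i) :=
    MvPolynomial.derivation_ext fun j => by
      change D i (zv j) = algebraMap _ (RF k l) (pderiv i (X j : MvPolynomial (Fin l) k))
      rw [hD i j, pderiv_X, Pi.single_apply]
      split_ifs <;> simp_all
  exact DFunLike.congr_fun h p

lemma IsPartialDeriv.exists_algebraMap_eq [CharZero k] (hD : IsPartialDeriv D) {β : RF k l}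
    (h : ∀ i, D i β = 0) : ∃ c : k, algebraMap k (RF k l) c = β := by
  let p := IsFractionRing.num (MvPolynomial (Fin l) k) β
  let q := (IsFractionRing.den (MvPolynomial (Fin l) k) β).1
  have hq : algebraMap _ (RF k l) q ≠ 0 := IsFractionRing.to_map_ne_zero_of_mem_nonZeroDivisors
    (IsFractionRing.den (MvPolynomial (Fin l) k) β).2
  have hβ : algebraMap _ (RF k l) p / algebraMap _ (RF k l) q = β :=
    IsFractionRing.mk'_num_den' _ β
  have hcop : IsRelPrime p q := IsFractionRing.num_den_reduced _ β
  have wronskian (i) : q * pderiv i p = p * pderiv i q := by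
    have hi := h i
    rw [← hβ, Derivation.leibniz_div, smul_eq_mul, smul_eq_mul, smul_eq_mul,
      hD.apply_algebraMap, hD.apply_algebraMap] at hi
    have := (mul_eq_zero.1 hi).resolve_left (pow_ne_zero 2 (inv_ne_zero hq))
    exact IsFractionRing.injective _ (RF k l) (by simpa only [map_mul, sub_eq_zero] using this)
  have hp_const := eq_C_of_forall_pderiv_eq_zero fun i => pderiv_eq_zero_of_dvd_pderiv
    (hcop.dvd_of_dvd_mul_left ⟨pderiv i q, wronskian i⟩)
  have hq_const := eq_C_of_forall_pderiv_eq_zero fun i => pderiv_eq_zero_of_dvd_pderiv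
    (hcop.symm.dvd_of_dvd_mul_left ⟨pderiv i p, (wronskian i).symm⟩)
  refine ⟨coeff 0 p / coeff 0 q, ?_⟩
  rw [← hβ, hp_const, hq_const, map_div₀, ← MvPolynomial.algebraMap_eq,
    ← IsScalarTower.algebraMap_apply, ← IsScalarTower.algebraMap_apply]
  simp

end Derivations

section WittDerivations

/-- The vector field `∑ᵢ zᵢ ^ r ∂ᵢ`. For `r = 0, 1, 2` these are the translation, the Euler field
and the special conformal field, which span the infinitesimal Möbius transformations. -/
def wittDerivation (D : Fin l → Derivation k (RF k l) (RF k l)) (r : ℕ) :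
    Derivation k (RF k l) (RF k l) :=
  ∑ i, (zv i : RF k l) ^ r • D i

variable {D : Fin l → Derivation k (RF k l) (RF k l)}

lemma wittDerivation_apply (r : ℕ) (α : RF k l) :
    wittDerivation D r α = ∑ i, zv i ^ r * D i α := by
  have h := congrFun (map_sum (Derivation.coeFnAddMonoidHom (R := k) (A := RF k l) (M := RF k l))
    (fun i => (zv i : RF k l) ^ r • D i) Finset.univ) α
  rwa [Finset.sum_apply] at h

lemma Delta_eq_wittDerivation (α : RF k l) : Delta D α = wittDerivation D 0 α := by
  simp [Delta, wittDerivation_apply]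

lemma DeltaStar_eq_wittDerivation (n : Fin l → ℤ) (α : RF k l) :
    DeltaStar D n α = wittDerivation D 2 α + (∑ i, (n i : RF k l) * zv i) * α := by
  rw [DeltaStar, Finset.sum_add_distrib, wittDerivation_apply, Finset.sum_mul]

lemma wittDerivation_zv (hD : IsPartialDeriv D) (r : ℕ) (j : Fin l) :
    wittDerivation D r (zv j) = zv j ^ r := by
  simp [wittDerivation_apply, hD _ j]

/- At `r = s = 0` the truncated index `r + s - 1` is harmless, as the coefficient vanishes. -/
lemma wittDerivation_commutator (hD : IsPartialDeriv D) (r s : ℕ) (α : RF k l) :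
    wittDerivation D r (wittDerivation D s α) - wittDerivation D s (wittDerivation D r α) =
      ((s : RF k l) - r) * wittDerivation D (r + s - 1) α := by
  have h : ⁅wittDerivation D r, wittDerivation D s⁆ =
      ((s : RF k l) - r) • wittDerivation D (r + s - 1) := by
    refine derivation_ext_zv fun j => ?_
    rw [Derivation.commutator_apply, Derivation.smul_apply]
    simp only [wittDerivation_zv hD, Derivation.leibniz_pow, smul_eq_mul, nsmul_eq_mul]
    rcases r with _ | r <;> rcases s with _ | s
    · simp
    · simp
    · simp only [Nat.cast_zero, Nat.cast_add, Nat.cast_one, pow_zero, zero_tsub,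
        Nat.add_sub_cancel, zero_mul, zero_sub, add_zero, mul_one, one_mul]
      ring
    · rw [show r + 1 + (s + 1) - 1 = r + s + 1 by lia]
      push_cast [Nat.add_sub_cancel]
      ring
  rw [← Derivation.commutator_apply, h, Derivation.smul_apply, smul_eq_mul]

end WittDerivations

section Scaling

lemma toRatFuncHom_X : toRatFuncHom k l Polynomial.X = RatFunc.X := by
  simp [toRatFuncHom]

lemma toRatFuncHom_C (p : MvPolynomial (Fin l) k) :
    toRatFuncHom k l (Polynomial.C p) = RatFunc.C (algebraMap _ (RF k l) p) := by
  simp [toRatFuncHom]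

lemma scaleAux_X (J : Finset (Fin l)) (i : Fin l) :
    scaleAux k l J (X i) =
      if i ∈ J then Polynomial.X * Polynomial.C (X i) else Polynomial.C (X i) := by
  simp [scaleAux]

lemma scaleAux_C (J : Finset (Fin l)) (c : k) :
    scaleAux k l J (C c) = Polynomial.C (C c) := by
  simp [scaleAux]

lemma scaleJ_algebraMap (J : Finset (Fin l)) (p : MvPolynomial (Fin l) k) :
    scaleJ J (algebraMap _ (RF k l) p) = toRatFuncHom k l (scaleAux k l J p) :=
  IsFractionRing.lift_algebraMap (K := RF k l) (g := (toRatFuncHom k l).comp (scaleAux k l J)) _ p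

lemma scaleJ_zv (J : Finset (Fin l)) (i : Fin l) :
    scaleJ J (zv i : RF k l) =
      if i ∈ J then RatFunc.X * RatFunc.C (zv i : RF k l) else RatFunc.C (zv i : RF k l) := by
  rw [zv, scaleJ_algebraMap, scaleAux_X, apply_ite (toRatFuncHom k l), map_mul, toRatFuncHom_X,
    toRatFuncHom_C]

lemma scaleJ_algebraMap_const (J : Finset (Fin l)) (c : k) :
    scaleJ J (algebraMap k (RF k l) c) = RatFunc.C (algebraMap k (RF k l) c) := by
  rw [IsScalarTower.algebraMap_apply k (MvPolynomial (Fin l) k) (RF k l),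
    MvPolynomial.algebraMap_eq, scaleJ_algebraMap, scaleAux_C, toRatFuncHom_C]

lemma eval_one_scaleAux (J : Finset (Fin l)) (p : MvPolynomial (Fin l) k) :
    (scaleAux k l J p).eval 1 = p := by
  have h : (Polynomial.evalRingHom 1).comp (scaleAux k l J) = RingHom.id _ := by
    refine MvPolynomial.ringHom_ext (fun c => by simp [scaleAux_C]) fun i => ?_
    by_cases hi : i ∈ J <;> simp [scaleAux_X, hi]
  exact DFunLike.congr_fun h p

variable {D : Fin l → Derivation k (RF k l) (RF k l)}

/- The Euler field is the derivative of the scaling flow at `t = 1`. -/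
lemma wittDerivation_one_algebraMap (hD : IsPartialDeriv D) (p : MvPolynomial (Fin l) k) :
    wittDerivation D 1 (algebraMap _ (RF k l) p) =
      algebraMap _ (RF k l) ((scaleAux k l Finset.univ p).derivative.eval 1) := by
  induction p using MvPolynomial.induction_on with
  | C c =>
    rw [scaleAux_C, ← MvPolynomial.algebraMap_eq, ← IsScalarTower.algebraMap_apply,
      Derivation.map_algebraMap]
    simp
  | add p q hp hq => simp only [map_add, hp, hq, Polynomial.eval_add]
  | mul_X p i hp =>
    have hX : wittDerivation D 1 (zv i) = zv i := by simpa using wittDerivation_zv hD 1 i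
    rw [zv] at hX
    rw [map_mul, Derivation.leibniz, hp, hX, map_mul, scaleAux_X, Polynomial.derivative_mul]
    simp only [eval_one_scaleAux, Finset.mem_univ, if_true, Polynomial.derivative_mul,
      Polynomial.derivative_X, Polynomial.derivative_C, Polynomial.eval_add, Polynomial.eval_mul,
      Polynomial.eval_X, Polynomial.eval_C, map_add, map_mul, smul_eq_mul,
      one_mul, mul_zero, add_zero]
    ring

/- Clearing denominators, homogeneity of `p / q` of degree `m - n` reads
`t ^ n * p(tz) * q(z) = t ^ m * p(z) * q(tz)`; differentiate at `t = 1`. -/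
lemma IsHomogeneousOn.wittDerivation_one (hD : IsPartialDeriv D) {d : ℤ} {α : RF k l}
    (h : IsHomogeneousOn Finset.univ d α) : wittDerivation D 1 α = d * α := by
  obtain ⟨p, q, hq, rfl⟩ := IsFractionRing.div_surjective (MvPolynomial (Fin l) k) α
  obtain ⟨m, n, rfl⟩ : ∃ m n : ℕ, d = m - n := ⟨d.toNat, (-d).toNat, by lia⟩
  have hq0 : algebraMap _ (RF k l) q ≠ 0 :=
    IsFractionRing.to_map_ne_zero_of_mem_nonZeroDivisors hq
  have hscale0 : scaleJ Finset.univ (algebraMap _ (RF k l) q) ≠ 0 := by simpa using hq0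
  have hCq0 : RatFunc.C (algebraMap _ (RF k l) q) ≠ 0 := by simpa using hq0
  have cleared : Polynomial.X ^ n * scaleAux k l Finset.univ p * Polynomial.C q =
      Polynomial.X ^ m * Polynomial.C p * scaleAux k l Finset.univ q := by
    apply toRatFuncHom_injective
    rw [IsHomogeneousOn, map_div₀, map_div₀, zpow_sub₀ RatFunc.X_ne_zero, zpow_natCast,
      zpow_natCast, div_mul_div_comm, div_eq_div_iff hscale0
      (mul_ne_zero (pow_ne_zero _ RatFunc.X_ne_zero) hCq0), scaleJ_algebraMap,
      scaleJ_algebraMap] at h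
    simp only [map_mul, map_pow, toRatFuncHom_X, toRatFuncHom_C]
    linear_combination h
  have differentiated := congrArg (fun P => algebraMap _ (RF k l) (P.derivative.eval 1)) cleared
  simp only [Polynomial.derivative_mul, Polynomial.derivative_X_pow, Polynomial.derivative_C,
    Polynomial.eval_add, Polynomial.eval_mul, Polynomial.eval_pow, Polynomial.eval_X,
    Polynomial.eval_C, Polynomial.eval_natCast, eval_one_scaleAux, map_add,
    map_mul, map_natCast, one_pow, mul_one, one_mul, mul_zero, add_zero,
    ← wittDerivation_one_algebraMap hD] at differentiated
  rw [Derivation.leibniz_div]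
  simp only [smul_eq_mul]
  field_simp
  push_cast
  linear_combination differentiated

end Scaling

section DerivationIdentities

lemma iterate_derivation_mul {R A : Type*} [CommSemiring R] [CommRing A] [Algebra R A]
    (E : Derivation R A A) (x : A) {y : A} (hy : E (E y) = 0) (m : ℕ) :
    E^[m + 1] (x * y) = E^[m + 1] x * y + (m + 1) * (E^[m] x * E y) := by
  induction m with
  | zero => simp only [zero_add, Function.iterate_one, Function.iterate_zero_apply,
      Derivation.leibniz, smul_eq_mul, Nat.cast_zero]; ring
  | succ m ih =>
    have hcast : E ((m : A) + 1) = 0 := by exact_mod_cast E.map_natCast (m + 1)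
    rw [Function.iterate_succ_apply', ih, map_add, Derivation.leibniz, Derivation.leibniz,
      Derivation.leibniz, hcast, hy, ← Function.iterate_succ_apply' (⇑E),
      ← Function.iterate_succ_apply' (⇑E) m]
    simp only [smul_eq_mul, mul_zero, zero_add, add_zero]
    push_cast
    ring

lemma exists_iterate_derivation_mul_eq_zero {R A : Type*} [CommSemiring R] [CommRing A]
    [Algebra R A] {E : Derivation R A A} {x y : A} (hx : ∃ m, E^[m] x = 0) (hy : E (E y) = 0) :
    ∃ m, E^[m] (x * y) = 0 := by
  obtain ⟨m, hm⟩ := hx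
  refine ⟨m + 1, ?_⟩
  rw [iterate_derivation_mul E x hy, Function.iterate_succ_apply', hm]
  simp

lemma derivation_prod_of_eq_mul {R A ι : Type*} [CommSemiring R] [CommRing A] [Algebra R A]
    (E : Derivation R A A) (s : Finset ι) {f c : ι → A} (h : ∀ i ∈ s, E (f i) = c i * f i) :
    E (∏ i ∈ s, f i) = (∑ i ∈ s, c i) * ∏ i ∈ s, f i := by
  induction s using Finset.cons_induction with
  | empty => simp
  | cons i s hi ih =>
    rw [Finset.prod_cons, Finset.sum_cons, Derivation.leibniz, h i (Finset.mem_cons_self i s),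
      ih fun j hj => h j (Finset.mem_cons_of_mem hj), smul_eq_mul, smul_eq_mul]
    ring

lemma derivation_zpow_of_eq_mul {R K : Type*} [CommRing R] [Field K] [Algebra R K]
    (E : Derivation R K K) {x c : K} (h : E x = c * x) (m : ℤ) : E (x ^ m) = m * c * x ^ m := by
  rcases eq_or_ne x 0 with rfl | hx
  · rcases eq_or_ne m 0 with rfl | hm
    · simp
    · simp [zero_zpow m hm]
  rw [Derivation.leibniz_zpow, h, smul_eq_mul, zsmul_eq_mul, zpow_sub_one₀ hx]
  field_simp

end DerivationIdentities

section DifferenceProducts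

/-- The product `∏_{i < j} (zᵢ - zⱼ) ^ eᵢⱼ`; only the exponents with `i < j` matter. -/
def diffProd (k : Type) [Field k] {l : ℕ} (e : Fin l → Fin l → ℤ) : RF k l :=
  ∏ i, ∏ j, if i < j then (zv i - zv j) ^ e i j else 1

lemma zv_injective : Function.Injective (zv : Fin l → RF k l) :=
  (IsFractionRing.injective _ _).comp (MvPolynomial.X_injective)

lemma mem_Phi_iff {α : RF k l} :
    α ∈ Phi k l ↔ ∃ p e, α = algebraMap (MvPolynomial (Fin l) k) (RF k l) p * diffProd k e :=
  Iff.rfl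

lemma diffProd_mem_Phi (e : Fin l → Fin l → ℤ) : diffProd k e ∈ Phi k l :=
  ⟨1, e, by rw [map_one, one_mul, diffProd]⟩

lemma diffProd_ne_zero (e : Fin l → Fin l → ℤ) : diffProd k e ≠ 0 := by
  refine Finset.prod_ne_zero_iff.2 fun i _ => Finset.prod_ne_zero_iff.2 fun j _ => ?_
  split_ifs with hij
  · exact zpow_ne_zero _ (sub_ne_zero.2 (zv_injective.ne hij.ne))
  · exact one_ne_zero

variable {D : Fin l → Derivation k (RF k l) (RF k l)}

lemma wittDerivation_diffProd (hD : IsPartialDeriv D) {r : ℕ} {c : Fin l → Fin l → RF k l}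
    (hc : ∀ i j, (zv i ^ r - zv j ^ r : RF k l) = c i j * (zv i - zv j)) (e : Fin l → Fin l → ℤ) :
    wittDerivation D r (diffProd k e) =
      (∑ i, ∑ j, if i < j then (e i j : RF k l) * c i j else 0) * diffProd k e := by
  refine derivation_prod_of_eq_mul _ _ fun i _ => derivation_prod_of_eq_mul _ _ fun j _ => ?_
  split_ifs
  · exact derivation_zpow_of_eq_mul _
      (by rw [map_sub, wittDerivation_zv hD, wittDerivation_zv hD, hc]) _
  · simp

lemma wittDerivation_zero_diffProd (hD : IsPartialDeriv D) (e : Fin l → Fin l → ℤ) :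
    wittDerivation D 0 (diffProd k e) = 0 := by
  rw [wittDerivation_diffProd hD (c := 0) (by simp)]
  simp

lemma wittDerivation_two_diffProd (hD : IsPartialDeriv D) (e : Fin l → Fin l → ℤ) :
    wittDerivation D 2 (diffProd k e) =
      (∑ i, ∑ j, if i < j then (e i j : RF k l) * (zv i + zv j) else 0) * diffProd k e :=
  wittDerivation_diffProd hD (fun _ _ => by ring) e

lemma exists_iterate_wittDerivation_zero_eq_zero (hD : IsPartialDeriv D) {α : RF k l}
    (hα : α ∈ Phi k l) : ∃ m, (wittDerivation D 0)^[m] α = 0 := by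
  obtain ⟨p, e, rfl⟩ := mem_Phi_iff.1 hα
  induction p using MvPolynomial.induction_on with
  | C c =>
    refine ⟨1, ?_⟩
    rw [← MvPolynomial.algebraMap_eq, ← IsScalarTower.algebraMap_apply, Function.iterate_one,
      Derivation.leibniz, wittDerivation_zero_diffProd hD, Derivation.map_algebraMap]
    simp
  | add p q hp hq =>
    obtain ⟨m, hm⟩ := hp ⟨p, e, rfl⟩
    obtain ⟨n, hn⟩ := hq ⟨q, e, rfl⟩
    refine ⟨n + m, ?_⟩
    rw [map_add, add_mul, iterate_map_add, Function.iterate_add_apply, hm, add_comm n,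
      Function.iterate_add_apply, hn, iterate_map_zero, iterate_map_zero, add_zero]
  | mul_X p i hp =>
    have hX : wittDerivation D 0 (wittDerivation D 0 (zv i)) = 0 := by
      simp [wittDerivation_zv hD]
    have := exists_iterate_derivation_mul_eq_zero (hp ⟨p, e, rfl⟩) hX
    rwa [mul_right_comm, zv, ← map_mul] at this

end DifferenceProducts

section PrimitiveVectors

attribute [local instance] LieRing.ofAssociativeRing

lemma lie_f_eq_zero_of_hasPrimitiveVectorWith_zero {R L M : Type*} [CommRing R] [IsDomain R]
    [CharZero R] [LieRing L] [LieAlgebra R L] [AddCommGroup M] [Module R M]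
    [Module.IsTorsionFree R M] [LieRingModule L M] [LieModule R L M] {h e f : L}
    {t : IsSl2Triple h e f} {m : M} (P : t.HasPrimitiveVectorWith m (0 : R))
    (hnil : ∃ n, (LieModule.toEnd R L M f ^ n) m = 0) : ⁅f, m⁆ = 0 := by
  obtain ⟨n, hn, hsucc⟩ := Nat.exists_not_and_succ_of_not_zero_of_exists P.ne_zero hnil
  have hlie := P.lie_e_pow_succ_toEnd_f n
  rw [hsucc, lie_zero, eq_comm, smul_eq_zero_iff_left hn, zero_sub, mul_neg, neg_eq_zero] at hlie
  have hn0 : n = 0 := by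
    exact_mod_cast (mul_eq_zero.1 hlie).resolve_left (Nat.cast_add_one_ne_zero n)
  simpa [hn0] using hsucc

/-- The operator `-Δ*(n₁,…,n_l)`; the sign makes it the raising operator of the `sl₂` triple whose
lowering operator is `Δ`. -/
def raisingOperator (D : Fin l → Derivation k (RF k l) (RF k l)) (n : Fin l → ℤ) :
    Module.End k (RF k l) :=
  -((wittDerivation D 2 : RF k l →ₗ[k] RF k l) +
    LinearMap.mulLeft k (∑ i, (n i : RF k l) * zv i))

/-- The operator `∑ᵢ (2 zᵢ ∂ᵢ + nᵢ)`, the commutator of `-Δ*(n₁,…,n_l)` and `Δ`. -/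
def weightOperator (D : Fin l → Derivation k (RF k l) (RF k l)) (n : Fin l → ℤ) :
    Module.End k (RF k l) :=
  (2 : k) • (wittDerivation D 1 : RF k l →ₗ[k] RF k l) +
    LinearMap.mulLeft k ((∑ i, n i : ℤ) : RF k l)

variable {D : Fin l → Derivation k (RF k l) (RF k l)}

lemma raisingOperator_apply (n : Fin l → ℤ) (α : RF k l) :
    raisingOperator D n α = -(wittDerivation D 2 α + (∑ i, (n i : RF k l) * zv i) * α) := rfl

lemma weightOperator_apply (n : Fin l → ℤ) (α : RF k l) :
    weightOperator D n α = 2 * wittDerivation D 1 α + (∑ i, n i : ℤ) * α := by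
  simp [weightOperator, ofNat_smul_eq_nsmul, two_mul, two_smul]

lemma weightOperator_ne_zero [CharZero k] (hD : IsPartialDeriv D) (n : Fin l → ℤ) (i : Fin l) :
    weightOperator D n ≠ 0 := by
  intro h
  have h_one := LinearMap.congr_fun h 1
  have h_zv := LinearMap.congr_fun h (zv i)
  simp only [weightOperator_apply, wittDerivation_zv hD, Derivation.map_one_eq_zero, pow_one,
    mul_zero, mul_one, zero_add, LinearMap.zero_apply] at h_one h_zv
  rw [h_one, zero_mul, add_zero] at h_zv
  simp [zv] at h_zv

lemma wittDerivation_sum_intCast_mul_zv (hD : IsPartialDeriv D) (r : ℕ) (n : Fin l → ℤ) :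
    wittDerivation D r (∑ i, (n i : RF k l) * zv i) = ∑ i, (n i : RF k l) * zv i ^ r := by
  simp [wittDerivation_zv hD]

lemma isSl2Triple_weightOperator [CharZero k] (hD : IsPartialDeriv D) (n : Fin l → ℤ)
    (i : Fin l) : IsSl2Triple (weightOperator D n) (raisingOperator D n)
      (wittDerivation D 0 : RF k l →ₗ[k] RF k l) where
  h_ne_zero := weightOperator_ne_zero hD n i
  lie_e_f := by
    ext α
    change raisingOperator D n (wittDerivation D 0 α) -
      wittDerivation D 0 (raisingOperator D n α) = weightOperator D n α
    rw [raisingOperator_apply, raisingOperator_apply, weightOperator_apply, map_neg, map_add,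
      Derivation.leibniz, wittDerivation_sum_intCast_mul_zv hD, Int.cast_sum]
    simp only [pow_zero, mul_one, smul_eq_mul]
    have commutator : wittDerivation D 0 (wittDerivation D 2 α) -
        wittDerivation D 2 (wittDerivation D 0 α) = 2 * wittDerivation D 1 α := by
      rw [wittDerivation_commutator hD 0 2 α]
      norm_num
    linear_combination commutator
  lie_h_e_nsmul := by
    ext α
    change weightOperator D n (raisingOperator D n α) -
      raisingOperator D n (weightOperator D n α) = (2 • raisingOperator D n) α
    have two_const : wittDerivation D 2 2 = 0 := mod_cast (wittDerivation D 2).map_natCast 2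
    simp only [two_nsmul, LinearMap.add_apply, raisingOperator_apply, weightOperator_apply,
      map_neg, map_add, Derivation.leibniz, wittDerivation_sum_intCast_mul_zv hD, two_const,
      Derivation.map_intCast, pow_one, smul_eq_mul]
    have commutator : wittDerivation D 1 (wittDerivation D 2 α) -
        wittDerivation D 2 (wittDerivation D 1 α) = wittDerivation D 2 α := by
      rw [wittDerivation_commutator hD 1 2 α]
      norm_num
    linear_combination -2 * commutator
  lie_h_f_nsmul := by
    ext α
    change weightOperator D n (wittDerivation D 0 α) -
      wittDerivation D 0 (weightOperator D n α) = -(2 • (wittDerivation D 0 α))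
    have two_const : wittDerivation D 0 2 = 0 := mod_cast (wittDerivation D 0).map_natCast 2
    simp only [weightOperator_apply, map_add, Derivation.leibniz, two_const,
      Derivation.map_intCast, two_nsmul, smul_eq_mul]
    have commutator : wittDerivation D 1 (wittDerivation D 0 α) -
        wittDerivation D 0 (wittDerivation D 1 α) = -wittDerivation D 0 α := by
      rw [wittDerivation_commutator hD 1 0 α]
      norm_num
    linear_combination 2 * commutator

lemma Delta_eq_zero_of_regular [CharZero k] (hD : IsPartialDeriv D) {n : Fin l → ℤ} {d : ℤ}
    (hd : 2 * d + ∑ i, n i = 0) {α : RF k l} (hα : α ∈ Phi k l)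
    (hreg : DeltaStar D n α = 0) (hhom : IsHomogeneousOn Finset.univ d α) :
    Delta D α = 0 := by
  rcases isEmpty_or_nonempty (Fin l) with _ | ⟨⟨i⟩⟩
  · simp [Delta]
  rcases eq_or_ne α 0 with rfl | hα0
  · simp [Delta]
  have primitive : (isSl2Triple_weightOperator hD n i).HasPrimitiveVectorWith α (0 : k) :=
    { ne_zero := hα0
      lie_h := by
        have hd' : (2 * d + (∑ i, n i : ℤ) : RF k l) = 0 := by exact_mod_cast hd
        rw [Module.End.lie_apply, weightOperator_apply, hhom.wittDerivation_one hD, zero_smul]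
        linear_combination α * hd'
      lie_e := by
        rw [Module.End.lie_apply, raisingOperator_apply, ← DeltaStar_eq_wittDerivation, hreg,
          neg_zero] }
  obtain ⟨m, hm⟩ := exists_iterate_wittDerivation_zero_eq_zero hD hα
  rw [Delta_eq_wittDerivation]
  refine lie_f_eq_zero_of_hasPrimitiveVectorWith_zero primitive ⟨m, ?_⟩
  rwa [LieModule.toEnd_module_end, LieHom.coe_id, id, Module.End.pow_apply]

end PrimitiveVectors

section Components

open scoped LaurentSeries
open WithZero

variable {L : Type} [Field L]

lemma coe_ratFunc_C (a : L) :
    ((RatFunc.C a : RatFunc L) : LaurentSeries L) = HahnSeries.single 0 a := by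
  have h := RatFunc.coe_coe (Polynomial.C a)
  rw [Polynomial.coe_C, PowerSeries.coe_C, RatFunc.coePolynomial, RatFunc.algebraMap_C] at h
  exact h.symm

lemma lcoeff_X_zpow_mul_C {m n : ℤ} (hn : n ≠ m) (a : L) :
    lcoeff n (RatFunc.X ^ m * RatFunc.C a) = 0 := by
  rw [lcoeff, map_mul, map_zpow₀, RatFunc.coe_X, ← RatFunc.single_zpow, coe_ratFunc_C,
    HahnSeries.single_mul_single, HahnSeries.coeff_single_of_ne]
  simpa using hn

lemma IsHomogeneousOn.component_eq_zero {J : Finset (Fin l)} {m : ℤ} {α : RF k l}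
    (h : IsHomogeneousOn J m α) {d : Fin l → ℤ} {n : ℤ} (hn : n - ∑ j ∈ J, d j ≠ m) :
    component J d n α = 0 := by
  rw [component, h, lcoeff_X_zpow_mul_C hn]

lemma isHomogeneousOn_empty (α : RF k l) : IsHomogeneousOn ∅ 0 α := by
  have haux : scaleAux k l ∅ = Polynomial.C :=
    MvPolynomial.ringHom_ext (fun c => scaleAux_C ∅ c) fun i => by simp [scaleAux_X]
  have h : scaleJ (k := k) (∅ : Finset (Fin l)) = RatFunc.C :=
    IsFractionRing.ringHom_ext (A := MvPolynomial (Fin l) k) fun p => by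
      rw [scaleJ_algebraMap, haux, toRatFuncHom_C]
  rw [IsHomogeneousOn, h, zpow_zero, one_mul]

lemma valuation_coe_ratFunc_C {a : L} (ha : a ≠ 0) :
    Valued.v ((RatFunc.C a : RatFunc L) : LaurentSeries L) = 1 := by
  have hle (b : L) : Valued.v ((RatFunc.C b : RatFunc L) : LaurentSeries L) ≤ 1 := by
    rw [← exp_zero, ← neg_zero, LaurentSeries.valuation_le_iff_coeff_lt_eq_zero, coe_ratFunc_C]
    exact fun n hn => HahnSeries.coeff_single_of_ne hn.ne
  have hpos : 0 < Valued.v ((RatFunc.C a : RatFunc L) : LaurentSeries L) :=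
    zero_lt_iff.2 (by simpa using ha)
  refine (hle a).antisymm ((inv_le_one₀ hpos).1 ?_)
  simpa only [map_inv₀] using hle a⁻¹

lemma valuation_coe_ratFunc_X :
    Valued.v ((RatFunc.X : RatFunc L) : LaurentSeries L) = exp (-1) := by
  rw [RatFunc.coe_X, LaurentSeries.valuation_single_zpow]

lemma exp_sum {ι : Type*} (s : Finset ι) (f : ι → ℤ) : exp (∑ i ∈ s, f i) = ∏ i ∈ s, exp (f i) := by
  induction s using Finset.cons_induction with
  | empty => simp
  | cons i s hi ih => rw [Finset.sum_cons, Finset.prod_cons, exp_add, ih]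

/-- The sum of the exponents `eᵢⱼ`, `i < j`, with both indices in `J`: the lowest degree in the
variables `{zⱼ : j ∈ J}` that occurs in the expansion of `diffProd k e`. -/
def innerDegree (e : Fin l → Fin l → ℤ) (J : Finset (Fin l)) : ℤ :=
  ∑ i, ∑ j, if i < j ∧ i ∈ J ∧ j ∈ J then e i j else 0

lemma valuation_scaleJ_sub (J : Finset (Fin l)) {i j : Fin l} (hij : i ≠ j) :
    Valued.v ((scaleJ J (zv i - zv j : RF k l) : RatFunc (RF k l)) : LaurentSeries (RF k l)) =
      if i ∈ J ∧ j ∈ J then exp (-1) else 1 := by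
  have hv (i : Fin l) : Valued.v ((RatFunc.C (zv i : RF k l) : RatFunc (RF k l)) :
      LaurentSeries (RF k l)) = 1 := valuation_coe_ratFunc_C (by simp [zv])
  have hlt : exp (-1 : ℤ) < 1 := exp_lt_exp.2 (by norm_num)
  rw [map_sub, scaleJ_zv, scaleJ_zv]
  by_cases hi : i ∈ J <;> by_cases hj : j ∈ J <;>
    simp only [hi, hj, if_true, if_false, and_true, and_false]
  · rw [← mul_sub, ← map_sub, map_mul, map_mul, valuation_coe_ratFunc_X,
      valuation_coe_ratFunc_C (sub_ne_zero.2 (zv_injective.ne hij)), mul_one]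
  · rw [map_sub, Valuation.map_sub_eq_of_lt_right] <;>
      simp only [map_mul, hv, valuation_coe_ratFunc_X, mul_one, hlt]
  · rw [map_sub, Valuation.map_sub_eq_of_lt_left] <;>
      simp only [map_mul, hv, valuation_coe_ratFunc_X, mul_one, hlt]
  · rw [← map_sub, valuation_coe_ratFunc_C (sub_ne_zero.2 (zv_injective.ne hij))]

lemma valuation_scaleJ_diffProd (J : Finset (Fin l)) (e : Fin l → Fin l → ℤ) :
    Valued.v ((scaleJ J (diffProd k e) : RatFunc (RF k l)) : LaurentSeries (RF k l)) =
      exp (-innerDegree e J) := by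
  simp only [diffProd, innerDegree, map_prod, ← Finset.sum_neg_distrib, exp_sum]
  refine Finset.prod_congr rfl fun i _ => Finset.prod_congr rfl fun j _ => ?_
  by_cases hij : i < j
  · rw [if_pos hij, map_zpow₀, map_zpow₀, map_zpow₀, valuation_scaleJ_sub J hij.ne]
    by_cases hJ : i ∈ J ∧ j ∈ J
    · simp [hij, hJ, ← exp_zsmul]
    · simp [hij, hJ]
  · simp [hij]

lemma component_diffProd_eq_zero {J : Finset (Fin l)} {e : Fin l → Fin l → ℤ} {d : Fin l → ℤ}
    {n : ℤ} (hn : n - ∑ j ∈ J, d j < innerDegree e J) : component J d n (diffProd k e) = 0 :=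
  (LaurentSeries.valuation_le_iff_coeff_lt_eq_zero (RF k l)).1
    (valuation_scaleJ_diffProd J e).le _ hn

lemma IsHomogeneousOn.prod {ι : Type*} {J : Finset (Fin l)} (s : Finset ι) {m : ι → ℤ}
    {f : ι → RF k l} (h : ∀ i ∈ s, IsHomogeneousOn J (m i) (f i)) :
    IsHomogeneousOn J (∑ i ∈ s, m i) (∏ i ∈ s, f i) := by
  rw [IsHomogeneousOn, map_prod, map_prod, Finset.prod_congr rfl h, Finset.prod_mul_distrib]
  congr 1
  induction s using Finset.cons_induction with
  | empty => simp
  | cons i s hi ih =>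
    rw [Finset.prod_cons, Finset.sum_cons, zpow_add₀ RatFunc.X_ne_zero,
      ih fun j hj => h j (Finset.mem_cons_of_mem hj)]

lemma isHomogeneousOn_univ_diffProd (e : Fin l → Fin l → ℤ) :
    IsHomogeneousOn Finset.univ (innerDegree e Finset.univ) (diffProd k e) := by
  refine .prod _ fun i _ => .prod _ fun j _ => ?_
  by_cases hij : i < j
  · simp [hij, IsHomogeneousOn, scaleJ_zv, ← mul_sub, mul_zpow]
  · simp [hij, IsHomogeneousOn]

end Components

section Uniqueness

variable {D : Fin l → Derivation k (RF k l) (RF k l)}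

/- The Wronskians `v ∂ᵢα - α ∂ᵢv` are annihilated by a square Vandermonde matrix. -/
lemma exists_smul_eq_of_wittDerivation_eq_mul [CharZero k] (hD : IsPartialDeriv D) {m : ℕ}
    (hl : l ≤ m) {α v : RF k l} (hv0 : v ≠ 0) {c : Fin m → RF k l}
    (hα : ∀ r : Fin m, wittDerivation D r α = c r * α)
    (hv : ∀ r : Fin m, wittDerivation D r v = c r * v) : ∃ a : k, a • v = α := by
  have wronskian_eq_zero : (fun i => v * D i α - α * D i v) = 0 :=
    Matrix.eq_zero_of_forall_pow_sum_mul_pow_eq_zero (zv_injective (k := k)) fun r => by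
      have h : v * wittDerivation D r α - α * wittDerivation D r v = 0 := by
        have hrα := hα (r.castLE hl)
        have hrv := hv (r.castLE hl)
        rw [Fin.val_castLE] at hrα hrv
        linear_combination v * hrα - α * hrv
      rw [wittDerivation_apply, wittDerivation_apply, Finset.mul_sum, Finset.mul_sum,
        ← Finset.sum_sub_distrib] at h
      rw [← h]
      exact Finset.sum_congr rfl fun i _ => by ring
  obtain ⟨a, ha⟩ := hD.exists_algebraMap_eq (β := α / v) fun i => by
    rw [Derivation.leibniz_div, smul_eq_mul, smul_eq_mul, smul_eq_mul,
      congrFun wronskian_eq_zero i, Pi.zero_apply, mul_zero]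
  exact ⟨a, by rw [Algebra.smul_def, ha, div_mul_cancel₀ _ hv0]⟩

lemma wittDerivation_eq_mul_of_regular [CharZero k] (hD : IsPartialDeriv D) {n : Fin l → ℤ}
    {d : ℤ} (hd : 2 * d + ∑ i, n i = 0) {α : RF k l} (hα : α ∈ Phi k l)
    (hreg : DeltaStar D n α = 0) (hhom : IsHomogeneousOn Finset.univ d α) (r : Fin 3) :
    wittDerivation D r α = ![0, (d : RF k l), -∑ i, (n i : RF k l) * zv i] r * α := by
  fin_cases r
  · simpa [Delta_eq_wittDerivation] using Delta_eq_zero_of_regular hD hd hα hreg hhom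
  · exact hhom.wittDerivation_one hD
  · rw [DeltaStar_eq_wittDerivation] at hreg
    simpa using eq_neg_of_add_eq_zero_left hreg

end Uniqueness

section Admissibility

lemma dependsOnlyOn_univ (α : RF k l) : dependsOnlyOn Finset.univ α := by
  have hpoly (p : MvPolynomial (Fin l) k) :
      dependsOnlyOn Finset.univ (algebraMap _ (RF k l) p) := by
    induction p using MvPolynomial.induction_on with
    | C c =>
      rw [← MvPolynomial.algebraMap_eq, ← IsScalarTower.algebraMap_apply]
      exact Subfield.subset_closure (.inl ⟨c, rfl⟩)
    | add p q hp hq => rw [map_add]; exact add_mem hp hq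
    | mul_X p i hp =>
      rw [map_mul]
      exact mul_mem hp (Subfield.subset_closure (.inr ⟨i, Finset.mem_univ i, rfl⟩))
  obtain ⟨p, q, -, rfl⟩ := IsFractionRing.div_surjective (MvPolynomial (Fin l) k) α
  exact div_mem (hpoly p) (hpoly q)

lemma smul_mem_Phi (c : k) {α : RF k l} (hα : α ∈ Phi k l) : c • α ∈ Phi k l := by
  obtain ⟨p, e, rfl⟩ := hα
  exact ⟨C c * p, e, by rw [map_mul, ← MvPolynomial.algebraMap_eq,
    ← IsScalarTower.algebraMap_apply, mul_assoc, Algebra.smul_def]⟩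

lemma scaleJ_smul (J : Finset (Fin l)) (c : k) (α : RF k l) :
    scaleJ J (c • α) = RatFunc.C (algebraMap k (RF k l) c) * scaleJ J α := by
  rw [Algebra.smul_def, map_mul, scaleJ_algebraMap_const]

lemma component_smul (J : Finset (Fin l)) (d : Fin l → ℤ) (n : ℤ) (c : k) (α : RF k l) :
    component J d n (c • α) = c • component J d n α := by
  rw [component, lcoeff, scaleJ_smul, map_mul, coe_ratFunc_C, HahnSeries.coeff_single_zero_mul,
    Algebra.smul_def, component, lcoeff]

lemma IsHomogeneousOn.smul {J : Finset (Fin l)} {d : ℤ} {α : RF k l} (h : IsHomogeneousOn J d α)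
    (c : k) : IsHomogeneousOn J d (c • α) := by
  rw [IsHomogeneousOn, scaleJ_smul, h, Algebra.smul_def, map_mul, mul_left_comm]

variable {D : Fin l → Derivation k (RF k l) (RF k l)}

lemma DeltaStar_smul (n : Fin l → ℤ) (c : k) (α : RF k l) :
    DeltaStar D n (c • α) = c • DeltaStar D n α := by
  rw [DeltaStar_eq_wittDerivation, DeltaStar_eq_wittDerivation, Derivation.map_smul,
    mul_smul_comm, smul_add]

lemma admissible_univ_iff {α : RF k l} :
    Admissible D Finset.univ α ↔ α ∈ Phi k l ∧ DeltaStar D (fun _ => 4) α = 0 ∧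
      IsHomogeneousOn Finset.univ (-(2 * l)) α ∧
      ∀ J, ∀ n : ℤ, (n < 0 ∨ n = 1) → component J (fun _ => 2) n α = 0 := by
  simp [Admissible, dependsOnlyOn_univ, DeltaStar]

lemma admissible_univ_zero : Admissible D Finset.univ (0 : RF k l) :=
  admissible_univ_iff.2 ⟨⟨0, 0, by simp⟩, by simp [DeltaStar], by simp [IsHomogeneousOn],
    fun J n _ => by simp [component, lcoeff]⟩

lemma Admissible.smul {α : RF k l} (h : Admissible D Finset.univ α) (c : k) :
    Admissible D Finset.univ (c • α) := by
  obtain ⟨hPhi, hreg, hhom, hcomp⟩ := admissible_univ_iff.1 h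
  exact admissible_univ_iff.2 ⟨smul_mem_Phi c hPhi, by rw [DeltaStar_smul, hreg, smul_zero],
    hhom.smul c, fun J n hn => by rw [component_smul, hcomp J n hn, smul_zero]⟩

lemma AdmissibleInd.smul {α : RF k l} (h : AdmissibleInd D Finset.univ α) (c : k) :
    AdmissibleInd D Finset.univ (c • α) :=
  ⟨h.1.smul c, fun J hJ hne hne' => by rw [component_smul, h.2 J hJ hne hne', smul_zero]⟩

lemma Admissible.wittDerivation_eq_mul [CharZero k] (hD : IsPartialDeriv D) {α : RF k l}
    (h : Admissible D Finset.univ α) (r : Fin 3) :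
    wittDerivation D r α =
      ![0, ((-(2 * l) : ℤ) : RF k l), -∑ i : Fin l, ((4 : ℤ) : RF k l) * zv i] r * α := by
  obtain ⟨hPhi, hreg, hhom, -⟩ := admissible_univ_iff.1 h
  have hdeg : 2 * -(2 * l : ℤ) + ∑ _ : Fin l, 4 = 0 := by
    rw [Finset.sum_const, Finset.card_univ, Fintype.card_fin, nsmul_eq_mul]
    ring
  exact wittDerivation_eq_mul_of_regular hD hdeg hPhi hreg hhom r

lemma Admissible.mem_span [CharZero k] (hD : IsPartialDeriv D) (hl : l ≤ 3) {α v : RF k l}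
    (hα : Admissible D Finset.univ α) (hv : Admissible D Finset.univ v) (hv0 : v ≠ 0) :
    α ∈ Submodule.span k {v} :=
  Submodule.mem_span_singleton.2 <| exists_smul_eq_of_wittDerivation_eq_mul hD hl hv0
    (hα.wittDerivation_eq_mul hD) (hv.wittDerivation_eq_mul hD)

lemma setOf_admissible_eq_span [CharZero k] (hD : IsPartialDeriv D) (hl : l ≤ 3) {v : RF k l}
    (hv : Admissible D Finset.univ v) (hv0 : v ≠ 0) :
    {α | Admissible D Finset.univ α} = (Submodule.span k {v} : Set (RF k l)) := by
  refine Set.Subset.antisymm (fun α hα => hα.mem_span hD hl hv hv0) fun α hα => ?_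
  obtain ⟨c, rfl⟩ := Submodule.mem_span_singleton.1 hα
  exact hv.smul c

lemma setOf_admissibleInd_eq_span [CharZero k] (hD : IsPartialDeriv D) (hl : l ≤ 3) {v : RF k l}
    (hv : AdmissibleInd D Finset.univ v) (hv0 : v ≠ 0) :
    {α | AdmissibleInd D Finset.univ α} = (Submodule.span k {v} : Set (RF k l)) := by
  refine Set.Subset.antisymm (fun α hα => hα.1.mem_span hD hl hv.1 hv0) fun α hα => ?_
  obtain ⟨c, rfl⟩ := Submodule.mem_span_singleton.1 hα
  exact hv.smul c

/- For `J = ∅` and `J = univ` the components vanish by homogeneity, for the other `J` because they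
lie below `innerDegree e J`. -/
lemma admissibleInd_diffProd {e : Fin l → Fin l → ℤ}
    (hreg : DeltaStar D (fun _ => 4) (diffProd k e) = 0)
    (hdeg : innerDegree e Finset.univ = -(2 * l))
    (hJ : ∀ J, J ≠ ∅ → J ≠ Finset.univ → 2 ≤ innerDegree e J + 2 * J.card) :
    AdmissibleInd D Finset.univ (diffProd k e) := by
  have proper {J : Finset (Fin l)} (hne : J ≠ ∅) (hne' : J ≠ Finset.univ) {n : ℤ} (hn : n < 2) :
      component J (fun _ => 2) n (diffProd k e) = 0 :=
    component_diffProd_eq_zero (by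
      have := hJ J hne hne'
      rw [Finset.sum_const, nsmul_eq_mul]
      lia)
  have hhom := isHomogeneousOn_univ_diffProd (k := k) e
  rw [hdeg] at hhom
  refine ⟨admissible_univ_iff.2 ⟨diffProd_mem_Phi e, hreg, hhom, fun J n hn => ?_⟩,
    fun J _ hne hne' => proper hne hne' (by norm_num)⟩
  rcases eq_or_ne J ∅ with rfl | hne
  · exact (isHomogeneousOn_empty _).component_eq_zero (by
      rw [Finset.sum_empty]
      lia)
  rcases eq_or_ne J Finset.univ with rfl | hne'
  · exact hhom.component_eq_zero (by
      rw [Finset.sum_const, Finset.card_univ, Fintype.card_fin, nsmul_eq_mul]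
      lia)
  · exact proper hne hne' (by lia)

end Admissibility

section SmallNumberOfVariables

lemma Admissible.eq_zero_of_fin_one [CharZero k] {D : Fin 1 → Derivation k (RF k 1) (RF k 1)}
    (hD : IsPartialDeriv D) {α : RF k 1} (h : Admissible D Finset.univ α) : α = 0 := by
  have translation : wittDerivation D 0 α = 0 := by simpa using h.wittDerivation_eq_mul hD 0
  have euler : wittDerivation D 1 α = -(2 * α) := by simpa using h.wittDerivation_eq_mul hD 1
  rw [wittDerivation_apply, Fintype.sum_unique, pow_zero, one_mul] at translation
  rw [wittDerivation_apply, Fintype.sum_unique, translation] at euler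
  simpa using euler

lemma diffProd_fin_two (e : Fin 2 → Fin 2 → ℤ) : diffProd k e = (zv 0 - zv 1) ^ e 0 1 := by
  simp [diffProd, Fin.prod_univ_two]

lemma diffProd_fin_three (e : Fin 3 → Fin 3 → ℤ) :
    diffProd k e =
      (zv 0 - zv 1) ^ e 0 1 * (zv 0 - zv 2) ^ e 0 2 * (zv 1 - zv 2) ^ e 1 2 := by
  simp [diffProd, Fin.prod_univ_three]

lemma admissibleInd_fin_two {D : Fin 2 → Derivation k (RF k 2) (RF k 2)}
    (hD : IsPartialDeriv D) :
    AdmissibleInd D Finset.univ (diffProd k fun _ _ : Fin 2 => -4) := by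
  refine admissibleInd_diffProd ?_ (by decide) (by decide)
  rw [DeltaStar_eq_wittDerivation, wittDerivation_two_diffProd hD]
  simp only [Fin.sum_univ_two, lt_self_iff_false, Fin.zero_lt_one, Fin.not_lt_zero,
    if_true, if_false]
  ring

lemma admissibleInd_fin_three {D : Fin 3 → Derivation k (RF k 3) (RF k 3)}
    (hD : IsPartialDeriv D) :
    AdmissibleInd D Finset.univ (diffProd k fun _ _ : Fin 3 => -2) := by
  refine admissibleInd_diffProd ?_ (by decide) (by decide)
  rw [DeltaStar_eq_wittDerivation, wittDerivation_two_diffProd hD]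
  simp only [Fin.sum_univ_three, Fin.reduceLT, if_true, if_false]
  ring

end SmallNumberOfVariables

end

/-- `R¹ = 0`, `R² = k·(z₁-z₂)^{-4}`, and
`R³ = R³₀ = k·(z₁-z₂)^{-2}(z₁-z₃)^{-2}(z₂-z₃)^{-2}`. -/
theorem statement6 {k : Type} [Field k] [CharZero k]
    (D1 : Fin 1 → Derivation k (RF k 1) (RF k 1)) (h1 : IsPartialDeriv D1)
    (D2 : Fin 2 → Derivation k (RF k 2) (RF k 2)) (h2 : IsPartialDeriv D2)
    (D3 : Fin 3 → Derivation k (RF k 3) (RF k 3)) (h3 : IsPartialDeriv D3) :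
    {α : RF k 1 | Admissible D1 Finset.univ α} = {0} ∧
    {α : RF k 2 | Admissible D2 Finset.univ α} =
      (Submodule.span k {((zv 0 - zv 1 : RF k 2) ^ (-4 : ℤ))} : Set (RF k 2)) ∧
    {α : RF k 3 | Admissible D3 Finset.univ α} =
      (Submodule.span k
        {((zv 0 - zv 1) ^ (-2 : ℤ) * (zv 0 - zv 2) ^ (-2 : ℤ)
            * (zv 1 - zv 2) ^ (-2 : ℤ) : RF k 3)} : Set (RF k 3)) ∧
    {α : RF k 3 | AdmissibleInd D3 Finset.univ α} =
      (Submodule.span k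
        {((zv 0 - zv 1) ^ (-2 : ℤ) * (zv 0 - zv 2) ^ (-2 : ℤ)
            * (zv 1 - zv 2) ^ (-2 : ℤ) : RF k 3)} : Set (RF k 3)) := by
  have R₂_generator := admissibleInd_fin_two h2
  have R₃_generator := admissibleInd_fin_three h3
  rw [← diffProd_fin_two fun _ _ => -4, ← diffProd_fin_three fun _ _ => -2]
  exact ⟨Set.eq_singleton_iff_unique_mem.2
      ⟨admissible_univ_zero, fun _ hα => hα.eq_zero_of_fin_one h1⟩,
    setOf_admissible_eq_span h2 (by norm_num) R₂_generator.1 (diffProd_ne_zero _),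
    setOf_admissible_eq_span h3 le_rfl R₃_generator.1 (diffProd_ne_zero _),
    setOf_admissibleInd_eq_span h3 le_rfl R₃_generator (diffProd_ne_zero _)⟩

end Griess
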